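/- Let g and h be integers with g ≥ h ≥ 2. There exists a constant C = C(g,h) > 0 such that every infinite C_h[g] set A of positive integers satisfies liminf_{x→∞} A(x) · (x log x)^{1/h} / x ≤ C; equivalently, there are infinitely many positive integers x with A(x) ≤ C · x^{1-1/h} · (log x)^{-1/h}. -/

import Mathlib

/-- `A` is a `C_h[g]` set: there do not exist a set `X` of `h` integers and `g` pairwise
distinct integers `k_1, …, k_g` such that `X + k_i ⊆ A` for every `i`. -/
def IsChgSet (h g : ℕ) (A : Set ℤ) : Prop :=
  ¬ ∃ (X : Finset ℤ) (k : Fin g → ℤ), X.card = h ∧ Function.Injective k ∧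
      ∀ i : Fin g, ∀ x ∈ X, x + k i ∈ A

open Classical in
/-- The counting function `A(x) = |{a ∈ A : a ≤ x}|` of a set of positive integers. -/
noncomputable def countFn (A : Set ℤ) (x : ℕ) : ℕ :=
  ((Finset.Icc (1 : ℤ) x).filter (· ∈ A)).card

open Classical in
/-- The part of `A` in the `l`-th block of length `N`. -/
noncomputable def blk (A : Set ℤ) (N l : ℕ) : Finset ℤ :=
  (Finset.Ioc ((l : ℤ) * N) (((l + 1 : ℕ) : ℤ) * N)).filter (· ∈ A)

lemma countFn_succ (A : Set ℤ) (N l : ℕ) :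
    countFn A ((l + 1) * N) = countFn A (l * N) + (blk A N l).card := by
  classical
  unfold countFn blk
  rw [← Finset.card_union_of_disjoint]
  · congr 1
    ext x
    simp only [Finset.mem_filter, Finset.mem_union, Finset.mem_Icc, Finset.mem_Ioc]
    push_cast
    have h1 : (0 : ℤ) ≤ (l : ℤ) * N := by positivity
    have h2 : ((l : ℤ) + 1) * N = (l : ℤ) * N + N := by ring
    have h3 : (0 : ℤ) ≤ N := by positivity
    rw [h2]
    constructor
    · rintro ⟨⟨a, b⟩, c⟩
      by_cases hx : x ≤ (l : ℤ) * N
      · exact Or.inl ⟨⟨a, hx⟩, c⟩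
      · exact Or.inr ⟨⟨by omega, b⟩, c⟩
    · rintro (⟨⟨a, b⟩, c⟩ | ⟨⟨a, b⟩, c⟩)
      · exact ⟨⟨a, by omega⟩, c⟩
      · exact ⟨⟨by omega, b⟩, c⟩
  · rw [Finset.disjoint_left]
    intro x hx hy
    simp only [Finset.mem_filter, Finset.mem_Icc, Finset.mem_Ioc] at hx hy
    push_cast at hx
    omega

/-- minimum of a finite set of integers (junk `0` for empty) -/
noncomputable def mn (S : Finset ℤ) : ℤ := if hS : S.Nonempty then S.min' hS else 0

lemma mn_mem {S : Finset ℤ} (hS : S.Nonempty) : mn S ∈ S := by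
  unfold mn; rw [dif_pos hS]; exact S.min'_mem hS

lemma mn_le {S : Finset ℤ} {x : ℤ} (hx : x ∈ S) : mn S ≤ x := by
  unfold mn; rw [dif_pos ⟨x, hx⟩]; exact S.min'_le x hx

noncomputable def nrm (S : Finset ℤ) : Finset ℤ := (S.image (fun x => x - mn S)).erase 0

lemma mem_iff_nrm {S : Finset ℤ} (hS : S.Nonempty) (x : ℤ) :
    x ∈ S ↔ x - mn S ∈ insert 0 (nrm S) := by
  unfold nrm
  rw [Finset.insert_erase]
  · simp
  · simp only [Finset.mem_image]
    exact ⟨mn S, mn_mem hS, by ring⟩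

lemma nrm_card {S : Finset ℤ} (hS : S.Nonempty) : (nrm S).card = S.card - 1 := by
  unfold nrm
  rw [Finset.card_erase_of_mem, Finset.card_image_of_injective]
  · intro a b hab; simpa using hab
  · simp only [Finset.mem_image]
    exact ⟨mn S, mn_mem hS, by ring⟩

lemma sum_choose_le (g h : ℕ) (hh : 2 ≤ h) (A : Set ℤ) (hA : IsChgSet h g A) (N M : ℕ) :
    ∑ l ∈ Finset.range M, (blk A N l).card.choose h ≤ g * N ^ (h - 1) := by
  classical
  have hdisj : ((Finset.range M : Finset ℕ) : Set ℕ).PairwiseDisjoint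
      (fun l => (blk A N l).powersetCard h) := by
    intro i _ j _ hij
    rw [Function.onFun, Finset.disjoint_left]
    intro S hSi hSj
    rw [Finset.mem_powersetCard] at hSi hSj
    have hne : S.Nonempty := by
      rw [← Finset.card_pos]; omega
    obtain ⟨x, hx⟩ := hne
    have h1 := hSi.1 hx
    have h2 := hSj.1 hx
    simp only [blk, Finset.mem_filter, Finset.mem_Ioc] at h1 h2
    have hN : (0 : ℤ) ≤ N := by positivity
    rcases lt_or_gt_of_ne hij with hlt | hlt
    · have : ((i + 1 : ℕ) : ℤ) * N ≤ (j : ℤ) * N :=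
        mul_le_mul_of_nonneg_right (by exact_mod_cast hlt) hN
      omega
    · have : ((j + 1 : ℕ) : ℤ) * N ≤ (i : ℤ) * N :=
        mul_le_mul_of_nonneg_right (by exact_mod_cast hlt) hN
      omega
  have hcard : ∑ l ∈ Finset.range M, (blk A N l).card.choose h
      = ((Finset.range M).biUnion (fun l => (blk A N l).powersetCard h)).card := by
    rw [Finset.card_biUnion hdisj]
    simp [Finset.card_powersetCard]
  rw [hcard]
  have key := Finset.card_le_mul_card_image_of_maps_to (f := nrm)
    (s := (Finset.range M).biUnion (fun l => (blk A N l).powersetCard h))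
    (t := (Finset.Ioo (0 : ℤ) N).powersetCard (h - 1)) ?_ g ?_
  · refine key.trans (Nat.mul_le_mul_left _ ?_)
    rw [Finset.card_powersetCard]
    refine (Nat.choose_le_pow _ _).trans (Nat.pow_le_pow_left ?_ _)
    simp
  · intro S hS
    simp only [Finset.mem_biUnion, Finset.mem_range, Finset.mem_powersetCard] at hS
    obtain ⟨l, _, hSl, hSc⟩ := hS
    have hne : S.Nonempty := by
      rw [← Finset.card_pos]; omega
    rw [Finset.mem_powersetCard]
    refine ⟨?_, by rw [nrm_card hne, hSc]⟩
    intro y hy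
    simp only [nrm, Finset.mem_erase, Finset.mem_image] at hy
    obtain ⟨hy0, x, hx, rfl⟩ := hy
    have h1 := hSl hx
    have h2 := hSl (mn_mem hne)
    have h3 := mn_le hx
    simp only [blk, Finset.mem_filter, Finset.mem_Ioc] at h1 h2
    push_cast at h1 h2
    have h4 : ((l : ℤ) + 1) * N = (l : ℤ) * N + N := by ring
    rw [h4] at h1 h2
    rw [Finset.mem_Ioo]
    omega
  · intro X hX
    by_contra hlt
    push Not at hlt
    obtain ⟨T, hT, hTc⟩ := Finset.exists_subset_card_eq hlt.le
    apply hA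
    rw [Finset.mem_powersetCard] at hX
    have h0 : (0 : ℤ) ∉ X := by
      intro h; have := hX.1 h; simp at this
    have hTp : ∀ S ∈ T, S.Nonempty ∧ nrm S = X ∧ ∀ x ∈ S, x ∈ A := by
      intro S hS
      have := hT hS
      simp only [Finset.mem_filter, Finset.mem_biUnion, Finset.mem_range,
        Finset.mem_powersetCard] at this
      obtain ⟨⟨l, _, hSl, hSc⟩, hn⟩ := this
      refine ⟨by rw [← Finset.card_pos]; omega, hn, fun x hx => ?_⟩
      have := hSl hx
      simp only [blk, Finset.mem_filter] at this
      exact this.2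
    let e := (Finset.equivFinOfCardEq hTc).symm
    refine ⟨insert 0 X, fun i => mn (e i).1, ?_, ?_, ?_⟩
    · rw [Finset.card_insert_of_notMem h0, hX.2]; omega
    · intro i j hij
      have hi := hTp _ (e i).2
      have hj := hTp _ (e j).2
      apply e.injective
      apply Subtype.ext
      ext x
      rw [mem_iff_nrm hi.1, mem_iff_nrm hj.1, hi.2.1, hj.2.1]
      simp only at hij
      rw [hij]
    · intro i x hx
      have hi := hTp _ (e i).2
      apply hi.2.2
      rw [mem_iff_nrm hi.1, hi.2.1]
      simpa using hx

lemma pow_le_choose' (h D : ℕ) : D ^ h ≤ (2 * h) ^ h * (D.choose h + 1) := by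
  by_cases hD : D ≤ 2 * h
  · calc D ^ h ≤ (2 * h) ^ h := Nat.pow_le_pow_left hD _
      _ ≤ _ := Nat.le_mul_of_pos_right _ (by omega)
  · push Not at hD
    have h1 := Nat.pow_sub_le_descFactorial D h
    rw [Nat.descFactorial_eq_factorial_mul_choose] at h1
    calc D ^ h ≤ (2 * (D + 1 - h)) ^ h := Nat.pow_le_pow_left (by omega) _
      _ = 2 ^ h * (D + 1 - h) ^ h := by rw [mul_pow]
      _ ≤ 2 ^ h * (h.factorial * D.choose h) := Nat.mul_le_mul_left _ h1
      _ ≤ 2 ^ h * (h ^ h * (D.choose h + 1)) := by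
          gcongr
          · exact Nat.factorial_le_pow h
          · omega
      _ = _ := by rw [mul_pow]; ring

lemma abel_sum (a w : ℕ → ℝ) (ha : a 0 = 0) (M : ℕ) :
    ∑ l ∈ Finset.range M, (a (l + 1) - a l) * w l
      = a M * w M + ∑ l ∈ Finset.range M, a (l + 1) * (w l - w (l + 1)) := by
  induction M with
  | zero => simp [ha]
  | succ n ih => rw [Finset.sum_range_succ, Finset.sum_range_succ, ih]; ring

lemma young (h : ℕ) (hh : 1 ≤ h) (t D : ℝ) (ht : 0 ≤ t) (hD : 0 ≤ D) :
    t ^ (h - 1) * D ≤ D ^ h + t ^ h := by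
  obtain ⟨k, rfl⟩ : ∃ k, h = k + 1 := ⟨h - 1, by omega⟩
  simp only [Nat.add_sub_cancel, pow_succ]
  rcases le_total t D with hl | hl
  · have : t ^ k * D ≤ D ^ k * D := by gcongr
    have : 0 ≤ t ^ k * t := by positivity
    linarith
  · have : t ^ k * D ≤ t ^ k * t := by gcongr
    have : 0 ≤ D ^ k * D := by positivity
    linarith

lemma wdiff (α : ℝ) (h1 : 1 / 2 ≤ α) (h2 : α ≤ 1) (x : ℝ) (hx : 1 ≤ x) :
    x ^ (-α) * (1 / (4 * x)) ≤ x ^ (-α) - (x + 1) ^ (-α) := by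
  have hx0 : 0 < x := by linarith
  have e : (x + 1) ^ (-α) = x ^ (-α) * (1 + (-(1 / (x + 1)))) ^ α := by
    have : 1 + (-(1 / (x + 1))) = x / (x + 1) := by field_simp; ring
    rw [this, Real.div_rpow hx0.le (by linarith), Real.rpow_neg hx0.le,
      Real.rpow_neg (by linarith)]
    have : x ^ α ≠ 0 := (Real.rpow_pos_of_pos hx0 _).ne'
    field_simp
  have hb : (1 + (-(1 / (x + 1)))) ^ α ≤ 1 + α * (-(1 / (x + 1))) := by
    apply rpow_one_add_le_one_add_mul_self
    · have : 1 / (x + 1) ≤ 1 := by rw [div_le_one (by linarith)]; linarith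
      linarith
    · linarith
    · exact h2
  have hc : 1 / (4 * x) ≤ α * (1 / (x + 1)) := by
    have : 1 / (4 * x) ≤ 1 / 2 * (1 / (x + 1)) := by
      rw [div_mul_div_comm, div_le_div_iff₀ (by linarith) (by linarith)]; linarith
    refine this.trans ?_
    gcongr
  have hp : 0 < x ^ (-α) := Real.rpow_pos_of_pos hx0 _
  rw [e]
  have : x ^ (-α) * (1 / (4 * x)) ≤ x ^ (-α) * (1 - (1 + (-(1 / (x + 1)))) ^ α) := by
    gcongr
    linarith
  linarith

lemma harm (M : ℕ) : ∑ l ∈ Finset.range M, (1 : ℝ) / ((l : ℝ) + 1) = ((harmonic M : ℚ) : ℝ) := by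
  unfold harmonic
  push_cast
  simp

set_option maxHeartbeats 2000000 in
theorem stmt2 (g h : ℕ) (hgh : h ≤ g) (hh : 2 ≤ h) :
    ∃ C : ℝ, 0 < C ∧ ∀ A : Set ℤ, (∀ a ∈ A, 0 < a) → A.Infinite → IsChgSet h g A →
      ∀ x₀ : ℕ, ∃ x : ℕ, x₀ ≤ x ∧
        (countFn A x : ℝ) ≤
          C * (x : ℝ) ^ (1 - (1 : ℝ) / h) * (Real.log x) ^ (-(1 : ℝ) / h) := by
  set B : ℝ := ((2 * h) ^ h : ℕ) * (g + 1) + h with hB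
  have hhpos : (2 : ℝ) ≤ h := by exact_mod_cast hh
  have hh0 : (0 : ℝ) < h := by linarith
  have hBpos : 0 ≤ B := by positivity
  refine ⟨4 * h * B + 1, by positivity, ?_⟩
  set C : ℝ := 4 * h * B + 1 with hC
  have hCpos : 0 < C := by positivity
  intro A _ _ hA x₀
  by_contra hcon
  push Not at hcon
  obtain ⟨N, hN3, hNx⟩ : ∃ N : ℕ, 3 ≤ N ∧ x₀ ≤ N := ⟨max 3 x₀, by simp, by simp⟩
  set α : ℝ := 1 - (1 : ℝ) / h with hα
  have hinv : (1 : ℝ) / h ≤ 1 / 2 := by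
    apply one_div_le_one_div_of_le <;> linarith
  have hinv0 : (0 : ℝ) < 1 / h := by positivity
  have hαl : 1 / 2 ≤ α := by linarith
  have hαu : α ≤ 1 := by linarith
  have hhα : (h : ℝ) * α = h - 1 := by rw [hα]; field_simp
  set n : ℝ := (N : ℝ) with hn
  have hn3 : (3 : ℝ) ≤ n := by rw [hn]; exact_mod_cast hN3
  have hn0 : 0 < n := by linarith
  set L : ℝ := Real.log n with hL
  have hL1 : 1 ≤ L := by
    rw [hL, Real.le_log_iff_exp_le hn0]
    have := Real.exp_one_lt_d9
    linarith
  have hL0 : 0 < L := by linarith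
  set M : ℕ := N ^ (h - 1) with hM
  have hMr : (M : ℝ) = n ^ (h - 1) := by rw [hM, hn]; push_cast; rfl
  have hhsub : ((h - 1 : ℕ) : ℝ) = h - 1 := by
    rw [Nat.cast_sub (by omega)]; simp
  have hlogM : Real.log M = (h - 1) * L := by
    rw [hMr, Real.log_pow, hhsub]
  -- pieces
  let a : ℕ → ℝ := fun l => (countFn A (l * N) : ℝ)
  let D : ℕ → ℝ := fun l => ((blk A N l).card : ℝ)
  let w : ℕ → ℝ := fun l => ((l : ℝ) + 1) ^ (-α)
  let t : ℕ → ℝ := fun l => n ^ α * (((l : ℝ) + 1) * L) ^ (-(1 / h) : ℝ)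
  have haD : ∀ l, a (l + 1) - a l = D l := by
    intro l
    simp only [a, D]
    rw [countFn_succ]; push_cast; ring
  have ha0 : a 0 = 0 := by simp [a, countFn]
  have hw0 : ∀ l, 0 < w l := fun l => Real.rpow_pos_of_pos (by positivity) _
  -- upper bound
  have hDh : ∑ l ∈ Finset.range M, D l ^ h ≤ ((2 * h) ^ h : ℕ) * (g + 1) * n ^ (h - 1) := by
    have h1 : ∑ l ∈ Finset.range M, (blk A N l).card ^ h
        ≤ (2 * h) ^ h * (g + 1) * N ^ (h - 1) := by
      calc _ ≤ ∑ l ∈ Finset.range M, (2 * h) ^ h * ((blk A N l).card.choose h + 1) :=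
            Finset.sum_le_sum fun l _ => pow_le_choose' h _
        _ = (2 * h) ^ h * (∑ l ∈ Finset.range M, (blk A N l).card.choose h + M) := by
            rw [← Finset.mul_sum, Finset.sum_add_distrib]; simp
        _ ≤ (2 * h) ^ h * (g * N ^ (h - 1) + N ^ (h - 1)) := by
            gcongr
            exact sum_choose_le g h hh A hA N M
        _ = _ := by ring
    have h2 : ((∑ l ∈ Finset.range M, (blk A N l).card ^ h : ℕ) : ℝ)
        ≤ (((2 * h) ^ h * (g + 1) * N ^ (h - 1) : ℕ) : ℝ) := by exact_mod_cast h1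
    simp only [D, hn]
    push_cast at h2 ⊢
    exact h2
  have ht0 : ∀ l, 0 ≤ t l := fun l => by positivity
  have hth : ∀ l, t l ^ h = n ^ (h - 1) / L * (1 / ((l : ℝ) + 1)) := by
    intro l
    have hl : (0 : ℝ) < (l : ℝ) + 1 := by positivity
    simp only [t]
    rw [mul_pow, ← Real.rpow_mul_natCast hn0.le, ← Real.rpow_mul_natCast (by positivity),
      mul_comm α, hhα, ← hhsub, Real.rpow_natCast]
    have : (-(1 / h) : ℝ) * h = -1 := by field_simp
    rw [this, Real.rpow_neg_one]
    field_simp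
  have hth1 : ∀ l, t l ^ (h - 1) = n ^ (α * (h - 1)) * L ^ (-α) * w l := by
    intro l
    have hl : (0 : ℝ) < (l : ℝ) + 1 := by positivity
    simp only [t, w]
    rw [mul_pow, ← Real.rpow_mul_natCast hn0.le, ← Real.rpow_mul_natCast (by positivity), hhsub]
    have : (-(1 / h) : ℝ) * (h - 1) = -α := by rw [hα]; field_simp
    rw [this, Real.mul_rpow hl.le hL0.le]
    ring
  have hsumt : ∑ l ∈ Finset.range M, t l ^ h ≤ h * n ^ (h - 1) := by
    simp only [hth]
    rw [← Finset.mul_sum, harm]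
    have h1 := harmonic_le_one_add_log M
    rw [hlogM] at h1
    have h2 : ((harmonic M : ℚ) : ℝ) ≤ h * L := by nlinarith
    calc n ^ (h - 1) / L * ((harmonic M : ℚ) : ℝ) ≤ n ^ (h - 1) / L * (h * L) := by gcongr
      _ = _ := by field_simp
  have hupper : n ^ (α * (h - 1)) * L ^ (-α) * ∑ l ∈ Finset.range M, D l * w l
      ≤ B * n ^ (h - 1) := by
    calc _ = ∑ l ∈ Finset.range M, t l ^ (h - 1) * D l := by
            rw [Finset.mul_sum]
            refine Finset.sum_congr rfl fun l _ => ?_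
            rw [hth1]; ring
      _ ≤ ∑ l ∈ Finset.range M, (D l ^ h + t l ^ h) :=
            Finset.sum_le_sum fun l _ => young h (by omega) _ _ (ht0 l) (by positivity)
      _ ≤ _ := by
            rw [Finset.sum_add_distrib, hB]
            nlinarith [hDh, hsumt]
  -- lower bound
  have hterm : ∀ l ∈ Finset.range M,
      C * n ^ α * (h * L) ^ (-(1 : ℝ) / h) / 4 * (1 / ((l : ℝ) + 1))
        ≤ a (l + 1) * (w l - w (l + 1)) := by
    intro l hl
    rw [Finset.mem_range] at hl
    have hl0 : (0 : ℝ) < (l : ℝ) + 1 := by positivity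
    have hl1 : (1 : ℝ) ≤ (l : ℝ) + 1 := by
      have : (0 : ℝ) ≤ l := by positivity
      linarith
    have hc := hcon ((l + 1) * N) (hNx.trans (Nat.le_mul_of_pos_left _ (by omega)))
    have hcast : (((l + 1) * N : ℕ) : ℝ) = ((l : ℝ) + 1) * n := by push_cast; rfl
    rw [hcast] at hc
    have hlM : (l : ℝ) + 1 ≤ M := by exact_mod_cast hl
    have hlog : Real.log (((l : ℝ) + 1) * n) ≤ h * L := by
      rw [Real.log_mul hl0.ne' hn0.ne']
      have := Real.log_le_log hl0 hlM
      rw [hlogM] at this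
      linarith
    have hlogpos : 0 < Real.log (((l : ℝ) + 1) * n) := by
      apply Real.log_pos
      nlinarith
    have hlog' : (h * L) ^ (-(1 : ℝ) / h) ≤ Real.log (((l : ℝ) + 1) * n) ^ (-(1 : ℝ) / h) := by
      apply Real.rpow_le_rpow_of_nonpos hlogpos hlog
      rw [neg_div]; linarith
    have hwd : w l * (1 / (4 * ((l : ℝ) + 1))) ≤ w l - w (l + 1) := by
      have := wdiff α hαl hαu _ hl1
      simp only [w]; push_cast
      exact this
    have hw1 : ((l : ℝ) + 1) ^ α * w l = 1 := by
      simp only [w]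
      rw [← Real.rpow_add hl0]; simp
    have hal : C * (((l : ℝ) + 1) * n) ^ α * (h * L) ^ (-(1 : ℝ) / h) ≤ a (l + 1) := by
      refine le_trans ?_ hc.le
      gcongr
    rw [Real.mul_rpow hl0.le hn0.le] at hal
    calc _ = C * (((l : ℝ) + 1) ^ α * n ^ α) * (h * L) ^ (-(1 : ℝ) / h)
            * (w l * (1 / (4 * ((l : ℝ) + 1)))) := by
          rw [show C * (((l : ℝ) + 1) ^ α * n ^ α) * (h * L) ^ (-(1 : ℝ) / h)
            * (w l * (1 / (4 * ((l : ℝ) + 1)))) = C * n ^ α * (h * L) ^ (-(1 : ℝ) / h)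
            * (((l : ℝ) + 1) ^ α * w l) * (1 / (4 * ((l : ℝ) + 1))) by ring, hw1]
          field_simp
      _ ≤ a (l + 1) * (w l * (1 / (4 * ((l : ℝ) + 1)))) := by
          have := hw0 l
          gcongr
      _ ≤ _ := by gcongr
  have hsumD : ∑ l ∈ Finset.range M, D l * w l
      = a M * w M + ∑ l ∈ Finset.range M, a (l + 1) * (w l - w (l + 1)) := by
    rw [← abel_sum a w ha0]
    exact Finset.sum_congr rfl fun l _ => by rw [haD]
  have hharm : L ≤ ((harmonic M : ℚ) : ℝ) := by
    have h1 := log_add_one_le_harmonic M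
    have hM0 : (0 : ℝ) < M := by rw [hMr]; positivity
    have h2 : Real.log M ≤ Real.log ((M + 1 : ℕ) : ℝ) := by
      apply Real.log_le_log hM0; push_cast; linarith
    rw [hlogM] at h2
    nlinarith
  have hhL : 1 / (h : ℝ) * L ^ (-(1 / h) : ℝ) ≤ (h * L) ^ (-(1 : ℝ) / h) := by
    rw [neg_div, Real.mul_rpow hh0.le hL0.le]
    gcongr
    have e : (1 : ℝ) / h = (h : ℝ) ^ (-1 : ℝ) := by rw [Real.rpow_neg_one, one_div]
    refine e.le.trans ?_
    apply Real.rpow_le_rpow_of_exponent_le (by linarith)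
    linarith
  have hlower : C * n ^ α * L ^ α / (4 * h) ≤ ∑ l ∈ Finset.range M, D l * w l := by
    rw [hsumD]
    have h1 := Finset.sum_le_sum hterm
    rw [← Finset.mul_sum, harm] at h1
    have h2 : 0 ≤ a M * w M := by
      have := hw0 M
      positivity
    have h3 : C * n ^ α * L ^ α / (4 * h)
        ≤ C * n ^ α * (h * L) ^ (-(1 : ℝ) / h) / 4 * ((harmonic M : ℚ) : ℝ) := by
      calc _ = C * n ^ α * (1 / (h : ℝ) * L ^ (-(1 / h) : ℝ)) / 4 * L := by
            rw [hα, sub_eq_add_neg (1 : ℝ) (1 / h), Real.rpow_add hL0, Real.rpow_one]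
            field_simp
        _ ≤ _ := by gcongr
    linarith
  have hfin : C / (4 * h) * n ^ (h - 1) ≤ B * n ^ (h - 1) := by
    refine le_trans (le_of_eq ?_) ((mul_le_mul_of_nonneg_left hlower (by positivity)).trans hupper)
    have e1 : n ^ (α * (h - 1)) * n ^ α = n ^ (h - 1) := by
      rw [← Real.rpow_add hn0, ← Real.rpow_natCast, hhsub, ← hhα]
      congr 1
      rw [hhα]; linear_combination hhα
    have e2 : L ^ (-α) * L ^ α = 1 := by rw [← Real.rpow_add hL0]; simp
    rw [show n ^ (α * (h - 1)) * L ^ (-α) * (C * n ^ α * L ^ α / (4 * h))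
      = C / (4 * h) * (n ^ (α * (h - 1)) * n ^ α) * (L ^ (-α) * L ^ α) by ring, e1, e2, mul_one]
  have hfin2 : C / (4 * h) ≤ B := le_of_mul_le_mul_right hfin (by positivity)
  rw [div_le_iff₀ (by positivity)] at hfin2
  linarith
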